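/- Let θ ∈ (0,1), let 𝒜 be a nonempty set and let A, B : 𝒜 → [0,∞). Suppose that for every u ∈ ℝ there is a bijection G_u : 𝒜 → 𝒜 such that A(G_u F) = e^{−uθ} A(F) and B(G_u F) = e^{u(1−θ)} B(F) for every F ∈ 𝒜. Then inf_{F ∈ 𝒜} ((1−θ) A(F) + θ B(F)) = inf_{F ∈ 𝒜} A(F)^{1−θ} B(F)^{θ}. -/

import Mathlib

/-- Lemma 1 (abstract core): if `A, B : 𝒜 → [0,∞)` and for every `u ∈ ℝ` there is a
bijection `G_u` of `𝒜` scaling `A` by `e^{-uθ}` and `B` by `e^{u(1-θ)}`, then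
`inf ((1-θ) A + θ B) = inf (A^{1-θ} B^θ)`. -/
theorem inf_convex_combination_eq_inf_geometric
    {θ : ℝ} (hθ0 : 0 < θ) (hθ1 : θ < 1)
    {𝒜 : Type*} [Nonempty 𝒜] (A B : 𝒜 → ℝ)
    (hA : ∀ F, 0 ≤ A F) (hB : ∀ F, 0 ≤ B F)
    (hG : ∀ u : ℝ, ∃ G : 𝒜 → 𝒜, Function.Bijective G ∧
      ∀ F, A (G F) = Real.exp (-u * θ) * A F ∧
           B (G F) = Real.exp (u * (1 - θ)) * B F) :
    (⨅ F, ((1 - θ) * A F + θ * B F)) = ⨅ F, (A F) ^ (1 - θ) * (B F) ^ θ := by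
  have h1 : 0 < 1 - θ := by linarith
  have hbL : BddBelow (Set.range fun F => (1 - θ) * A F + θ * B F) := by
    refine ⟨0, ?_⟩
    rintro _ ⟨F, rfl⟩
    have := hA F
    have := hB F
    positivity
  have hbR : BddBelow (Set.range fun F => (A F) ^ (1 - θ) * (B F) ^ θ) := by
    refine ⟨0, ?_⟩
    rintro _ ⟨F, rfl⟩
    have := hA F
    have := hB F
    positivity
  apply le_antisymm
  · refine le_ciInf fun F => ?_
    have key : ∀ ε : ℝ, 0 < ε → (⨅ F, ((1 - θ) * A F + θ * B F)) ≤
        (A F + ε) ^ (1 - θ) * (B F + ε) ^ θ := by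
      intro ε hε
      have ha : 0 < A F + ε := by linarith [hA F]
      have hb : 0 < B F + ε := by linarith [hB F]
      set u := Real.log (A F + ε) - Real.log (B F + ε) with hu
      obtain ⟨G, -, hGF⟩ := hG u
      obtain ⟨e1, e2⟩ := hGF F
      have hle := ciInf_le hbL (G F)
      simp only [e1, e2] at hle
      have p1 : Real.exp (-u * θ) * (A F + ε) = (A F + ε) ^ (1 - θ) * (B F + ε) ^ θ := by
        rw [Real.rpow_def_of_pos ha, Real.rpow_def_of_pos hb, ← Real.exp_add]
        nth_rewrite 1 [← Real.exp_log ha]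
        rw [← Real.exp_add]
        congr 1
        rw [hu]; ring
      have p2 : Real.exp (u * (1 - θ)) * (B F + ε) =
          (A F + ε) ^ (1 - θ) * (B F + ε) ^ θ := by
        rw [Real.rpow_def_of_pos ha, Real.rpow_def_of_pos hb, ← Real.exp_add]
        nth_rewrite 1 [← Real.exp_log hb]
        rw [← Real.exp_add]
        congr 1
        rw [hu]; ring
      have q1 : Real.exp (-u * θ) * A F ≤ (A F + ε) ^ (1 - θ) * (B F + ε) ^ θ := by
        rw [← p1]; gcongr; linarith
      have q2 : Real.exp (u * (1 - θ)) * B F ≤ (A F + ε) ^ (1 - θ) * (B F + ε) ^ θ := by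
        rw [← p2]; gcongr; linarith
      have r1 := mul_le_mul_of_nonneg_left q1 h1.le
      have r2 := mul_le_mul_of_nonneg_left q2 hθ0.le
      linarith
    have hc : Continuous fun ε : ℝ => (A F + ε) ^ (1 - θ) * (B F + ε) ^ θ :=
      ((continuous_const.add continuous_id).rpow_const fun _ => Or.inr h1.le).mul
        ((continuous_const.add continuous_id).rpow_const fun _ => Or.inr hθ0.le)
    have ht := (hc.tendsto 0).mono_left (nhdsWithin_le_nhds (s := Set.Ioi 0))
    simp only [add_zero] at ht
    exact ge_of_tendsto ht (by filter_upwards [self_mem_nhdsWithin] with ε hε using key ε hε)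
  · refine le_ciInf fun F => (ciInf_le hbR F).trans ?_
    exact Real.geom_mean_le_arith_mean2_weighted h1.le hθ0.le (hA F) (hB F) (by ring)
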